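/- For an abelian group G, the space G^# is normal if and only if G is countable. -/

import Mathlib

open scoped Pointwise

/-- The Bohr topology on an abelian group `G`: the initial topology induced by the
family of all group homomorphisms from `G` to the circle group `ℝ/ℤ`. -/
noncomputable def bohrTopology (G : Type*) [AddCommGroup G] : TopologicalSpace G :=
  ⨅ χ : G →+ AddCircle (1 : ℝ), TopologicalSpace.induced χ inferInstance

/-! ### Algebra: an uncountable abelian group has an uncountable independent family -/

theorem bohr_countable_fiber {G : Type*} [AddCommGroup G] (n : ℕ)
    (h : {g : G | n • g = 0}.Countable) (x : G) : {g : G | n • g = x}.Countable := by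
  rcases Set.eq_empty_or_nonempty {g : G | n • g = x} with h0 | ⟨g0, hg0⟩
  · rw [h0]; exact Set.countable_empty
  · refine (h.image (fun g => g + g0)).mono ?_
    intro g hg
    refine ⟨g - g0, ?_, by simp⟩
    simp only [Set.mem_ofPred_eq] at *
    rw [smul_sub, hg, hg0, sub_self]

theorem bohr_countable_torsion {G : Type*} [AddCommGroup G]
    (h : ∀ p : ℕ, p.Prime → {g : G | p • g = 0}.Countable) (n : ℕ) (hn : 0 < n) :
    {g : G | n • g = 0}.Countable := by
  induction n using Nat.strong_induction_on with
  | _ n ih =>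
    by_cases h1 : n = 1
    · subst h1; simp
    · obtain ⟨p, hp, m, rfl⟩ := Nat.exists_prime_and_dvd h1
      have hm : 0 < m := Nat.pos_of_mul_pos_left hn
      have hlt : m < p * m := by nlinarith [hp.two_le]
      have := ih m hlt hm
      refine (this.biUnion (t := fun x _ => {g : G | p • g = x})
        (fun x _ => bohr_countable_fiber p (h p hp) x)).mono ?_
      intro g hg
      simp only [Set.mem_iUnion, Set.mem_ofPred_eq] at *
      exact ⟨p • g, by rw [smul_smul, mul_comm, hg], rfl⟩

theorem bohr_exists_disjoint {G : Type*} [AddCommGroup G] (hG : ¬ Countable G)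
    (H : Submodule ℤ G) (hH : (H : Set G).Countable) :
    ∃ g : G, g ≠ 0 ∧ Disjoint (Submodule.span ℤ {g}) H := by
  by_contra! hcon
  have key : ∀ g : G, g ≠ 0 → ∃ k : ℤ, k • g ∈ H ∧ k • g ≠ 0 := by
    intro g hg
    have := hcon g hg
    rw [Submodule.disjoint_def] at this
    push Not at this
    obtain ⟨x, hx, hxH, hx0⟩ := this
    obtain ⟨k, rfl⟩ := Submodule.mem_span_singleton.1 hx
    exact ⟨k, hxH, hx0⟩
  have hp : ∀ p : ℕ, p.Prime → {g : G | p • g = 0}.Countable := by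
    intro p hp
    refine hH.mono ?_
    intro g hg
    by_cases h0 : g = 0
    · subst h0; exact H.zero_mem
    obtain ⟨k, hk, hk0⟩ := key g h0
    have hg' : (p : ℤ) • g = 0 := by simpa using hg
    have hcop : IsCoprime (p : ℤ) k := by
      rw [(Nat.prime_iff_prime_int.1 hp).coprime_iff_not_dvd]
      rintro ⟨c, rfl⟩
      apply hk0
      rw [mul_comm, mul_smul, hg', smul_zero]
    obtain ⟨a, b, hab⟩ := hcop
    have : g = b • (k • g) := by
      calc g = (a * p + b * k) • g := by rw [hab, one_smul]
        _ = b • (k • g) := by rw [add_smul, mul_smul, hg', smul_zero, zero_add, mul_smul]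
    rw [SetLike.mem_coe, this]
    exact H.smul_mem _ hk
  have ht := bohr_countable_torsion hp
  apply hG
  rw [← Set.countable_univ_iff]
  have : (⋃ n : ℕ, ⋃ x ∈ (H : Set G), {g : G | (n + 1) • g = x}).Countable := by
    refine Set.countable_iUnion fun n => hH.biUnion fun x _ => ?_
    exact bohr_countable_fiber _ (ht _ n.succ_pos) x
  refine this.mono ?_
  intro g _
  simp only [Set.mem_iUnion, Set.mem_ofPred_eq]
  by_cases h0 : g = 0
  · subst h0; exact ⟨0, 0, H.zero_mem, by simp⟩
  obtain ⟨k, hk, hk0⟩ := key g h0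
  have hkn : k ≠ 0 := by rintro rfl; simp at hk0
  refine ⟨k.natAbs - 1, k.natAbs • g, ?_, ?_⟩
  · have hk' : k.natAbs • g = k • g ∨ k.natAbs • g = -(k • g) := by
      rw [← natCast_zsmul, ← neg_smul]
      rcases Int.natAbs_eq k with h | h
      · left; congr 1; omega
      · right; congr 1; omega
    rcases hk' with h | h
    · rw [h]; exact hk
    · rw [h]; exact H.neg_mem hk
  · congr 1
    have : 0 < k.natAbs := Int.natAbs_pos.2 hkn
    omega

theorem bohr_countable_sSup {G : Type*} [AddCommGroup G] (S : Set (Submodule ℤ G))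
    (hS : S.Countable) (hc : ∀ N ∈ S, ∃ g : G, g ≠ 0 ∧ N = Submodule.span ℤ {g}) :
    ((sSup S : Submodule ℤ G) : Set G).Countable := by
  choose! f hf using hc
  have h1 : sSup S ≤ Submodule.span ℤ (f '' S) := by
    refine sSup_le fun N hN => ?_
    rw [(hf N hN).2]
    refine Submodule.span_mono ?_
    exact Set.singleton_subset_iff.2 ⟨N, hN, rfl⟩
  have h2 : ((Submodule.span ℤ (f '' S) : Submodule ℤ G) : Set G).Countable := by
    have : Countable (f '' S) := (hS.image f).to_subtype
    rw [Finsupp.span_eq_range_linearCombination]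
    exact Set.countable_range _
  exact h2.mono h1

theorem bohr_exists_indep {G : Type*} [AddCommGroup G] (hG : ¬ Countable G) :
    ∃ S : Set (Submodule ℤ G), ¬ S.Countable ∧ sSupIndep S ∧
      ∀ N ∈ S, ∃ g : G, g ≠ 0 ∧ N = Submodule.span ℤ {g} := by
  obtain ⟨S, hS⟩ := zorn_subset {S : Set (Submodule ℤ G) | sSupIndep S ∧
      ∀ N ∈ S, ∃ g : G, g ≠ 0 ∧ N = Submodule.span ℤ {g}} (by
    intro c hc hch
    refine ⟨⋃₀ c, ⟨iSupIndep_sUnion_of_directed hch.directedOn fun s hs => (hc hs).1, ?_⟩,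
      fun s hs => Set.subset_sUnion_of_mem hs⟩
    rintro N ⟨s, hs, hN⟩
    exact (hc hs).2 N hN)
  refine ⟨S, fun hcount => ?_, hS.prop.1, hS.prop.2⟩
  obtain ⟨g, hg, hdis⟩ := bohr_exists_disjoint hG _ (bohr_countable_sSup S hcount hS.prop.2)
  have hmem : Submodule.span ℤ {g} ∈ S := by
    refine hS.le_of_ge (y := insert (Submodule.span ℤ {g}) S) ⟨?_, ?_⟩ (Set.subset_insert _ _)
      (Set.mem_insert _ _)
    · intro N hN
      rcases Set.mem_insert_iff.1 hN with rfl | hN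
      · refine hdis.mono_right (sSup_le_sSup ?_)
        rintro M ⟨hM, hM'⟩
        exact hM.resolve_left hM'
      · have h1 : Disjoint N (sSup (S \ {N})) := hS.prop.1 hN
        have h2 : Disjoint (N ⊔ sSup (S \ {N})) (Submodule.span ℤ {g}) := by
          refine hdis.symm.mono_left (sup_le (le_sSup hN) (sSup_le_sSup Set.sdiff_subset))
        refine (h1.disjoint_sup_right_of_disjoint_sup_left h2).mono_right ?_
        refine sSup_le ?_
        rintro M ⟨hM, hM'⟩
        rcases Set.mem_insert_iff.1 hM with rfl | hM
        · exact le_sup_right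
        · exact le_sup_of_le_left (le_sSup ⟨hM, hM'⟩)
    · intro N hN
      rcases Set.mem_insert_iff.1 hN with rfl | hN
      · exact ⟨g, hg, rfl⟩
      · exact hS.prop.2 N hN
  have : Submodule.span ℤ {g} = ⊥ := by
    have := hdis.mono_right (le_sSup hmem)
    simpa using this
  rw [Submodule.span_singleton_eq_bot] at this
  exact hg this

/-- Extension of characters. -/
theorem bohr_extend {A G : Type*} [AddCommGroup A] [AddCommGroup G] (f : A →ₗ[ℤ] G)
    (hf : Function.Injective f) (χ : A →ₗ[ℤ] AddCircle (1 : ℝ)) :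
    ∃ ψ : G →+ AddCircle (1 : ℝ), ∀ a, ψ (f a) = χ a := by
  obtain ⟨g, hg⟩ := (Module.Baer.of_divisible (AddCircle (1 : ℝ))).extension_property f hf χ
  exact ⟨g.toAddMonoidHom, fun a => by rw [← hg]; rfl⟩

theorem bohr_circle_finite (n : ℕ) (hn : 2 ≤ n) :
    ∃ t : AddCircle (1 : ℝ), n • t = 0 ∧ 1 / 4 ≤ ‖t‖ := by
  refine ⟨(((n / 2 : ℕ) : ℝ) / (n : ℝ) : ℝ), ?_, ?_⟩
  · rw [← AddCircle.coe_nsmul, nsmul_eq_mul, mul_div_cancel₀ _ (by positivity)]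
    rw [AddCircle.coe_eq_zero_iff]
    exact ⟨((n / 2 : ℕ) : ℤ), by rw [zsmul_eq_mul, mul_one, Int.cast_natCast]⟩
  · have hn' : (0 : ℝ) < n := by positivity
    have h1 : ((n / 2 : ℕ) : ℝ) * 2 ≤ n := by exact_mod_cast Nat.div_mul_le_self n 2
    have h2 : (n : ℝ) ≤ ((n / 2 : ℕ) : ℝ) * 4 := by
      have : n ≤ (n / 2) * 4 := by omega
      exact_mod_cast this
    have h3 : (0 : ℝ) ≤ ((n / 2 : ℕ) : ℝ) / (n : ℝ) := by positivity
    rw [(AddCircle.norm_coe_eq_abs_iff (1 : ℝ) one_ne_zero).2, abs_of_nonneg h3]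
    · rw [le_div_iff₀ hn']; linarith
    · rw [abs_of_nonneg h3, abs_one, div_le_iff₀ hn']; linarith

theorem bohr_char_cyclic {G : Type*} [AddCommGroup G] (g : G) (hg : g ≠ 0) :
    ∃ χ : Submodule.span ℤ {g} →ₗ[ℤ] AddCircle (1 : ℝ),
      1 / 4 ≤ ‖χ ⟨g, Submodule.mem_span_singleton_self g⟩‖ := by
  have hspan : ∀ x : Submodule.span ℤ {g}, ∃ k : ℤ, k • g = x :=
    fun x => Submodule.mem_span_singleton.1 x.2
  have ht : ∃ t : AddCircle (1 : ℝ), 1 / 4 ≤ ‖t‖ ∧ ∀ k : ℤ, k • g = 0 → k • t = 0 := by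
    by_cases h0 : addOrderOf g = 0
    · refine ⟨((1 / 2 : ℝ) : AddCircle (1 : ℝ)), ?_, ?_⟩
      · rw [AddCircle.norm_half_period_eq]; norm_num
      · intro k hk
        rw [← addOrderOf_dvd_iff_zsmul_eq_zero, h0] at hk
        have : k = 0 := by simpa using hk
        simp [this]
    · have h1 : addOrderOf g ≠ 1 := by
        rwa [Ne, AddMonoid.addOrderOf_eq_one_iff]
      obtain ⟨t, ht, ht'⟩ := bohr_circle_finite (addOrderOf g) (by omega)
      refine ⟨t, ht', fun k hk => ?_⟩
      rw [← addOrderOf_dvd_iff_zsmul_eq_zero] at hk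
      obtain ⟨c, rfl⟩ := hk
      rw [mul_comm, mul_smul, natCast_zsmul, ht, smul_zero]
  obtain ⟨t, ht, htk⟩ := ht
  choose k hk using hspan
  have hwd : ∀ (x : Submodule.span ℤ {g}) (m : ℤ), m • g = x → k x • t = m • t := by
    intro x m hm
    rw [← sub_eq_zero, ← sub_smul]
    apply htk
    rw [sub_smul, hk, hm, sub_self]
  refine ⟨(AddMonoidHom.mk' (fun x => k x • t) ?_).toIntLinearMap, ?_⟩
  · intro x y
    rw [← add_smul]
    apply hwd
    rw [add_smul, hk, hk]; rfl
  · have := hwd ⟨g, Submodule.mem_span_singleton_self g⟩ 1 (by simp)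
    simpa [this] using ht

theorem bohr_family.{u} {G : Type u} [AddCommGroup G] (hG : ¬ Countable G) :
    ∃ (ι : Type u) (e : ι → G), ¬ Countable ι ∧ ∀ T : Set ι, ∃ χ : G →+ AddCircle (1 : ℝ),
      (∀ i ∉ T, χ (e i) = 0) ∧ ∀ i ∈ T, 1 / 4 ≤ ‖χ (e i)‖ := by
  classical
  obtain ⟨S, hS, hind, hcyc⟩ := bohr_exists_indep hG
  have hcyc' : ∀ N : S, ∃ g : N.1, ∃ χ : N.1 →ₗ[ℤ] AddCircle (1 : ℝ), 1 / 4 ≤ ‖χ g‖ := by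
    rintro ⟨N, hN⟩
    obtain ⟨g, hg, rfl⟩ := hcyc N hN
    obtain ⟨χ, hχ⟩ := bohr_char_cyclic g hg
    exact ⟨_, χ, hχ⟩
  choose e χ hχ using hcyc'
  refine ⟨S, fun N => (e N : G), by simpa using hS, fun T => ?_⟩
  rw [sSupIndep_iff] at hind
  have hinj := hind.dfinsupp_lsum_injective
  obtain ⟨ψ, hψ⟩ := bohr_extend _ hinj
    (DFinsupp.lsum ℕ (fun N : S => if N ∈ T then χ N else 0))
  have hval : ∀ N : S, ψ (e N) = if N ∈ T then χ N (e N) else 0 := by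
    intro N
    have := hψ (DFinsupp.single N (e N))
    rw [DFinsupp.lsum_single, DFinsupp.lsum_single] at this
    rw [Submodule.subtype_apply] at this
    rw [this]
    split_ifs <;> rfl
  refine ⟨ψ, fun i hi => by rw [hval, if_neg hi], fun i hi => by rw [hval, if_pos hi]; exact hχ i⟩

/-! ### Topologies induced by families of characters -/

open Topology

set_option linter.style.haveILetI false

/-- The topology induced by a family of characters. -/
@[reducible]
noncomputable def bohrFam {G ι : Type*} [AddCommGroup G] (f : ι → G →+ AddCircle (1 : ℝ)) :
    TopologicalSpace G :=
  ⨅ i, TopologicalSpace.induced (f i) inferInstance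

theorem bohrFam_group {G ι : Type*} [AddCommGroup G] (f : ι → G →+ AddCircle (1 : ℝ)) :
    @IsTopologicalAddGroup G (bohrFam f) _ :=
  topologicalAddGroup_iInf fun i => topologicalAddGroup_induced (f i)

theorem bohrFam_secondCountable {G ι : Type*} [AddCommGroup G] [Countable ι]
    (f : ι → G →+ AddCircle (1 : ℝ)) : @SecondCountableTopology G (bohrFam f) :=
  TopologicalSpace.secondCountableTopology_iInf
    fun i => TopologicalSpace.secondCountableTopology_induced _ _ (f i)

theorem bohrFam_regular {G ι : Type*} [AddCommGroup G]
    (f : ι → G →+ AddCircle (1 : ℝ)) : @RegularSpace G (bohrFam f) :=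
  regularSpace_iInf fun i => regularSpace_induced (f i)

theorem bohrFam_inducing {G ι : Type*} [AddCommGroup G] (f : ι → G →+ AddCircle (1 : ℝ)) :
    @Topology.IsInducing G (ι → AddCircle (1 : ℝ)) (bohrFam f) _ (AddMonoidHom.pi f) :=
  inducing_iInf_to_pi (fun i => (f i : G → AddCircle (1 : ℝ)))

theorem bohrFam_continuous {G ι : Type*} [AddCommGroup G] (f : ι → G →+ AddCircle (1 : ℝ))
    (i : ι) : @Continuous G _ (bohrFam f) _ (f i) :=
  continuous_iInf_dom continuous_induced_dom

theorem bohrFam_mono {G ι κ : Type*} [AddCommGroup G] (f : ι → G →+ AddCircle (1 : ℝ))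
    (g : κ → G →+ AddCircle (1 : ℝ)) (h : ∀ j, ∃ i, f i = g j) : bohrFam f ≤ bohrFam g := by
  refine le_iInf fun j => ?_
  obtain ⟨i, hi⟩ := h j
  rw [← hi]
  exact iInf_le _ i

theorem bohrFam_totallyBounded {G ι : Type*} [AddCommGroup G] (f : ι → G →+ AddCircle (1 : ℝ))
    (W : Set G) (hW : W ∈ @nhds G (bohrFam f) 0) :
    ∃ (t : Finset (ι → AddCircle (1 : ℝ))) (P : (ι → AddCircle (1 : ℝ)) → Set G),
      (∀ g, ∃ j ∈ t, g ∈ P j) ∧ ∀ j ∈ t, ∀ x ∈ P j, ∀ y ∈ P j, x - y ∈ W := by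
  letI := bohrFam f
  rw [(bohrFam_inducing f).nhds_eq_comap, map_zero] at hW
  obtain ⟨O, hO, hOW⟩ := hW
  obtain ⟨V, hV, hVO⟩ := exists_nhds_half_neg hO
  obtain ⟨t, -, ht⟩ := (isCompact_univ (X := ι → AddCircle (1 : ℝ))).elim_nhds_subcover
    (fun x => {y | y - x ∈ V}) (fun x _ => by
      have : Filter.Tendsto (fun y => y - x) (nhds x) (nhds (x - x)) :=
        (continuous_id.sub continuous_const).tendsto x
      rw [sub_self] at this
      exact this hV)
  refine ⟨t, fun j => {g | AddMonoidHom.pi f g - j ∈ V}, fun g => ?_, fun j _ x hx y hy => ?_⟩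
  · have := ht (Set.mem_univ (AddMonoidHom.pi f g))
    simp only [Set.mem_iUnion] at this
    obtain ⟨j, hj, h⟩ := this
    exact ⟨j, hj, h⟩
  · apply hOW
    have := hVO _ hx _ hy
    rwa [sub_sub_sub_cancel_right, ← map_sub] at this

theorem bohr_nearly_open {G κ : Type*} [AddCommGroup G] [TopologicalSpace G]
    [IsTopologicalAddGroup G] (t : Finset κ) (P : κ → Set G) (hcov : ∀ g, ∃ j ∈ t, g ∈ P j)
    (W : Set G) (hW : ∀ j ∈ t, ∀ x ∈ P j, ∀ y ∈ P j, x - y ∈ W) : closure W ∈ nhds (0 : G) := by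
  classical
  have h1 : ∃ j ∈ t, (interior (closure (P j))).Nonempty := by
    by_contra! hcon
    have h2 : ∀ s : Finset κ, s ⊆ t → interior (⋃ j ∈ s, closure (P j)) = ∅ := by
      intro s
      induction s using Finset.induction_on with
      | empty => intro _; simp
      | insert a s ha ih =>
        intro hs
        rw [Finset.set_biUnion_insert, interior_union_isClosed_of_interior_empty isClosed_closure]
        · exact hcon a (hs (Finset.mem_insert_self _ _))
        · exact ih (fun x hx => hs (Finset.mem_insert_of_mem hx))
    have h3 : (⋃ j ∈ t, closure (P j)) = Set.univ := by
      rw [Set.eq_univ_iff_forall]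
      intro g
      obtain ⟨j, hj, hg⟩ := hcov g
      simp only [Set.mem_iUnion]
      exact ⟨j, hj, subset_closure hg⟩
    have h4 := h2 t subset_rfl
    rw [h3, interior_univ] at h4
    exact Set.univ_nonempty.ne_empty h4
  obtain ⟨j, hj, y, hy⟩ := h1
  have hc : Filter.Tendsto (fun g => y + g) (nhds 0) (nhds (y + 0)) :=
    (continuous_const.add continuous_id).tendsto 0
  rw [add_zero] at hc
  filter_upwards [hc (isOpen_interior.mem_nhds hy)] with g hg
  have := map_mem_closure₂ (continuous_sub (G := G)) (interior_subset hg) (interior_subset hy)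
    (hW j hj)
  simpa using this

theorem bohrFam_ccc {G ι : Type*} [AddCommGroup G] (f : ι → G →+ AddCircle (1 : ℝ))
    (D : Set (Set G)) (hD : ∀ W ∈ D, W.Nonempty ∧ IsOpen[bohrFam f] W)
    (hdis : D.PairwiseDisjoint id) : D.Countable := by
  letI := bohrFam f
  have hO : ∀ W : D, ∃ O : Set (ι → AddCircle (1 : ℝ)), IsOpen O ∧ AddMonoidHom.pi f ⁻¹' O = W :=
    fun W => (bohrFam_inducing f).isOpen_iff.1 (hD W W.2).2
  choose O hOo hOW using hO
  let K : AddSubgroup (ι → AddCircle (1 : ℝ)) := (AddMonoidHom.pi f).range.topologicalClosure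
  have hKc : IsClosed (K : Set (ι → AddCircle (1 : ℝ))) :=
    AddSubgroup.isClosed_topologicalClosure _
  haveI : CompactSpace K := isCompact_iff_compactSpace.1 hKc.isCompact
  letI : MeasurableSpace K := borel K
  haveI : BorelSpace K := ⟨rfl⟩
  let μ : MeasureTheory.Measure K := MeasureTheory.Measure.addHaar
  have hcount := MeasureTheory.Measure.countable_meas_pos_of_disjoint_iUnion (μ := μ)
    (As := fun W : D => (Subtype.val ⁻¹' O W : Set K))
    (fun W => ((hOo W).preimage continuous_subtype_val).measurableSet) (by
      intro W W' hne
      change Disjoint (Subtype.val ⁻¹' O W : Set K) (Subtype.val ⁻¹' O W' : Set K)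
      rw [Set.disjoint_left]
      rintro ⟨x, hx⟩ h1 h2
      obtain ⟨_, ⟨h3, h4⟩, g, rfl⟩ := mem_closure_iff.1 (show x ∈ closure _ from hx)
        (O W ∩ O W') ((hOo W).inter (hOo W')) ⟨h1, h2⟩
      have h5 := hdis W.2 W'.2 (fun h => hne (Subtype.ext h))
      have h3' : g ∈ (W : Set G) := by rw [← hOW W]; exact h3
      have h4' : g ∈ (W' : Set G) := by rw [← hOW W']; exact h4
      exact Set.disjoint_left.1 h5 h3' h4')
  have hall : {W : D | 0 < μ (Subtype.val ⁻¹' O W : Set K)} = Set.univ := by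
    rw [Set.eq_univ_iff_forall]
    intro W
    refine ((hOo W).preimage continuous_subtype_val).measure_pos μ ?_
    obtain ⟨g, hg⟩ := (hD W W.2).1
    refine ⟨⟨AddMonoidHom.pi f g, subset_closure ⟨g, rfl⟩⟩, ?_⟩
    rw [← hOW W] at hg
    exact hg
  rw [hall, Set.countable_univ_iff] at hcount
  exact hcount

theorem bohrFam_basis {G ι : Type*} [AddCommGroup G] (f : ι → G →+ AddCircle (1 : ℝ))
    (V : Set G) (hV : IsOpen[bohrFam f] V) (y : G) (hy : y ∈ V) :
    ∃ (F : Finset ι) (W : Set G), IsOpen[bohrFam (fun i : F => f i)] W ∧ y ∈ W ∧ W ⊆ V := by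
  obtain ⟨O, hO, rfl⟩ := (letI := bohrFam f; (bohrFam_inducing f).isOpen_iff.1 hV)
  obtain ⟨I, u, hu, hI⟩ := isOpen_pi_iff.1 hO _ hy
  refine ⟨I, ⋂ i : I, f i ⁻¹' u i, ?_, ?_, ?_⟩
  · letI := bohrFam (fun i : I => f i)
    exact isOpen_iInter_of_finite fun i =>
      (hu i i.2).1.preimage (bohrFam_continuous (fun i : I => f i) i)
  · simp only [Set.mem_iInter]
    exact fun i => (hu i i.2).2
  · intro x hx
    simp only [Set.mem_iInter] at hx
    exact hI fun i hi => hx ⟨i, hi⟩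

/-- The closure of an open set in the Bohr topology is detected by countably many characters. -/
theorem bohrFam_main {G ι : Type*} [AddCommGroup G] (f : ι → G →+ AddCircle (1 : ℝ))
    (U : Set G) (hU : IsOpen[bohrFam f] U) :
    ∃ C : Set ι, C.Countable ∧ ∀ x, x ∈ @closure G (bohrFam (fun i : C => f i)) U →
      ∀ V, IsOpen[bohrFam f] V → x ∈ V → (V ∩ U).Nonempty := by
  classical
  let 𝒲 : Set (Set G) := {W | W.Nonempty ∧ W ⊆ U ∧
    ∃ F : Finset ι, IsOpen[bohrFam (fun i : F => f i)] W}
  obtain ⟨D, hD⟩ := zorn_subset {D : Set (Set G) | D ⊆ 𝒲 ∧ D.PairwiseDisjoint id} (by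
    intro c hc hch
    refine ⟨⋃₀ c, ⟨Set.sUnion_subset fun s hs => (hc hs).1, ?_⟩,
      fun s hs => Set.subset_sUnion_of_mem hs⟩
    exact (Set.pairwiseDisjoint_sUnion hch.directedOn).2 fun s hs => (hc hs).2)
  have hDW : ∀ W ∈ D, W ∈ 𝒲 := fun W hW => hD.prop.1 hW
  have hcount : D.Countable := by
    refine bohrFam_ccc f D (fun W hW => ⟨(hDW W hW).1, ?_⟩) hD.prop.2
    obtain ⟨F, hF⟩ := (hDW W hW).2.2
    exact bohrFam_mono f (fun i : F => f i) (fun j => ⟨j, rfl⟩) _ hF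
  have hex : ∀ W ∈ D, ∃ F : Finset ι, IsOpen[bohrFam (fun i : F => f i)] W :=
    fun W hW => (hDW W hW).2.2
  choose! F hF using hex
  let C : Set ι := ⋃ W ∈ D, (F W : Set ι)
  have hCf : bohrFam f ≤ bohrFam (fun i : C => f i) := bohrFam_mono _ _ (fun j => ⟨j, rfl⟩)
  refine ⟨C, hcount.biUnion fun W _ => (F W).countable_toSet, fun x hx V hV hxV => ?_⟩
  have hU0 : IsOpen[bohrFam (fun i : C => f i)] (⋃₀ D) := by
    refine @isOpen_sUnion _ (bohrFam (fun i : C => f i)) _ fun W hW => ?_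
    refine bohrFam_mono (fun i : C => f i) (fun i : F W => f i) (fun j => ⟨⟨j, ?_⟩, rfl⟩) _
      (hF W hW)
    simp only [C, Set.mem_iUnion]
    exact ⟨W, hW, j.2⟩
  have hU0U : ⋃₀ D ⊆ U := Set.sUnion_subset fun W hW => (hDW W hW).2.1
  -- a neighbourhood of zero
  have hVx : {g : G | g + x ∈ V} ∈ @nhds G (bohrFam f) 0 := by
    letI := bohrFam f
    haveI := bohrFam_group f
    refine IsOpen.mem_nhds (hV.preimage (continuous_id.add continuous_const)) ?_
    simpa using hxV
  obtain ⟨t, P, hcov, hP⟩ := bohrFam_totallyBounded f _ hVx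
  letI τC := bohrFam (fun i : C => f i)
  haveI := bohrFam_group (fun i : C => f i)
  have hcl := bohr_nearly_open t P hcov _ hP
  have hO : {y : G | y - x ∈ closure {g : G | g + x ∈ V}} ∈ nhds x := by
    have : Filter.Tendsto (fun y => y - x) (nhds x) (nhds (x - x)) :=
      (continuous_id.sub continuous_const).tendsto x
    rw [sub_self] at this
    exact this hcl
  obtain ⟨O, hOsub, hOo, hxO⟩ := mem_nhds_iff.1 hO
  obtain ⟨y, hyO, hyU⟩ := mem_closure_iff.1 hx O hOo hxO
  have hOU : IsOpen[bohrFam f] (O ∩ U) := @IsOpen.inter G (bohrFam f) _ _ (hCf _ hOo) hU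
  obtain ⟨F', W', hW'o, hyW', hW'sub⟩ := bohrFam_basis f _ hOU y ⟨hyO, hyU⟩
  have hmeet : ∃ z ∈ W', z ∈ ⋃₀ D := by
    by_contra! hcon
    have hins : W' ∈ D := by
      refine hD.le_of_ge (y := insert W' D) ⟨?_, ?_⟩ (Set.subset_insert _ _) (Set.mem_insert _ _)
      · refine Set.insert_subset ⟨⟨y, hyW'⟩, fun z hz => (hW'sub hz).2, F', hW'o⟩ hD.prop.1
      · refine hD.prop.2.insert fun W hW _ => ?_
        rw [id, id, Set.disjoint_left]
        exact fun z hz hzW => hcon z hz ⟨W, hW, hzW⟩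
    exact hcon y hyW' ⟨W', hins, hyW'⟩
  obtain ⟨z, hzW', hzD⟩ := hmeet
  have hz := hOsub (hW'sub hzW').1
  obtain ⟨w, hw1, hw2⟩ := mem_closure_iff.1 hz {g : G | g + x ∈ ⋃₀ D}
    (hU0.preimage (continuous_id.add continuous_const)) (by simpa using hzD)
  exact ⟨w + x, hw2, hU0U hw1⟩

/-! ### Closed sets in the Bohr topology -/

theorem bohr_separate {G : Type*} [AddCommGroup G] (H : AddSubgroup G) (x : G) (hx : x ∉ H) :
    ∃ χ : G →+ AddCircle (1 : ℝ), (∀ h ∈ H, χ h = 0) ∧ χ x ≠ 0 := by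
  have hne : (QuotientAddGroup.mk' H x) ≠ 0 := by
    intro h
    exact hx ((QuotientAddGroup.eq_zero_iff x).1 h)
  obtain ⟨χ, hχ⟩ := bohr_char_cyclic _ hne
  obtain ⟨ψ, hψ⟩ := bohr_extend (Submodule.subtype _) (Submodule.subtype_injective _) χ
  refine ⟨ψ.comp (QuotientAddGroup.mk' H), fun h hh => ?_, fun h0 => ?_⟩
  · have : QuotientAddGroup.mk' H h = 0 := (QuotientAddGroup.eq_zero_iff h).2 hh
    rw [AddMonoidHom.comp_apply, this, map_zero]
  · rw [← hψ] at hχ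
    have h0' : ψ (QuotientAddGroup.mk' H x) = 0 := h0
    rw [Submodule.subtype_apply, h0', norm_zero] at hχ
    norm_num at hχ

theorem bohr_char_continuous {G : Type*} [AddCommGroup G] (χ : G →+ AddCircle (1 : ℝ)) :
    @Continuous G _ (bohrTopology G) _ χ :=
  continuous_iInf_dom continuous_induced_dom

theorem bohr_t1 (G : Type*) [AddCommGroup G] : @T1Space G (bohrTopology G) := by
  letI := bohrTopology G
  rw [t1Space_iff_exists_open]
  intro x y hxy
  obtain ⟨χ, -, hχ⟩ := bohr_separate (⊥ : AddSubgroup G) (x - y) (by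
    rw [AddSubgroup.mem_bot, sub_eq_zero]; exact hxy)
  refine ⟨{z | χ z ≠ χ y}, isOpen_ne_fun (bohr_char_continuous χ) continuous_const, ?_, ?_⟩
  · intro h
    apply hχ
    rw [map_sub, h, sub_self]
  · intro h
    exact h rfl

theorem bohr_support {G ι : Type*} [AddCommGroup G] (e : ι → G) (x : G)
    (hx : x ∈ AddSubgroup.closure (Set.range e)) :
    ∃ F : Finset ι, ∀ χ : G →+ AddCircle (1 : ℝ), (∀ i ∈ F, χ (e i) = 0) → χ x = 0 := by
  classical
  induction hx using AddSubgroup.closure_induction with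
  | mem x hx =>
    obtain ⟨i, rfl⟩ := hx
    exact ⟨{i}, fun χ h => h i (Finset.mem_singleton_self i)⟩
  | zero => exact ⟨∅, fun χ _ => map_zero χ⟩
  | add x y _ _ hx hy =>
    obtain ⟨F, hF⟩ := hx
    obtain ⟨F', hF'⟩ := hy
    refine ⟨F ∪ F', fun χ h => ?_⟩
    rw [map_add, hF χ fun i hi => h i (Finset.mem_union_left _ hi),
      hF' χ fun i hi => h i (Finset.mem_union_right _ hi), add_zero]
  | neg x _ hx =>
    obtain ⟨F, hF⟩ := hx
    exact ⟨F, fun χ h => by rw [map_neg, hF χ h, neg_zero]⟩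

theorem bohr_closed {G ι : Type*} [AddCommGroup G] (e : ι ⊕ ι → G)
    (he : ∀ T : Set (ι ⊕ ι), ∃ χ : G →+ AddCircle (1 : ℝ),
      (∀ i ∉ T, χ (e i) = 0) ∧ ∀ i ∈ T, 1 / 4 ≤ ‖χ (e i)‖) (R : Set (ι × ι)) :
    IsClosed[bohrTopology G] ((fun p : ι × ι => e (Sum.inl p.1) + e (Sum.inr p.2)) '' R) := by
  letI := bohrTopology G
  haveI := bohr_t1 G
  refine isClosed_of_closure_subset fun x hx => ?_
  have hxH : x ∈ AddSubgroup.closure (Set.range e) := by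
    by_contra hxH
    obtain ⟨χ, hχ, hχx⟩ := bohr_separate _ x hxH
    obtain ⟨_, h1, p, -, rfl⟩ := mem_closure_iff.1 hx {z | χ z ≠ 0}
      (isOpen_ne_fun (bohr_char_continuous χ) continuous_const) hχx
    apply h1
    apply hχ
    exact add_mem (AddSubgroup.subset_closure ⟨_, rfl⟩) (AddSubgroup.subset_closure ⟨_, rfl⟩)
  obtain ⟨F, hF⟩ := bohr_support e x hxH
  obtain ⟨χ₁, h10, h11⟩ := he {s | s ∉ F ∧ ∃ i, s = Sum.inl i}
  obtain ⟨χ₂, h20, h21⟩ := he {s | s ∉ F ∧ ∃ i, s = Sum.inr i}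
  have hx1 : χ₁ x = 0 := hF χ₁ fun i hi => h10 i fun h => h.1 hi
  have hx2 : χ₂ x = 0 := hF χ₂ fun i hi => h20 i fun h => h.1 hi
  have hO : IsOpen {y : G | ‖χ₁ y‖ < 1 / 4 ∧ ‖χ₂ y‖ < 1 / 4} :=
    (isOpen_lt (bohr_char_continuous χ₁).norm continuous_const).inter
      (isOpen_lt (bohr_char_continuous χ₂).norm continuous_const)
  have hxO : x ∈ {y : G | ‖χ₁ y‖ < 1 / 4 ∧ ‖χ₂ y‖ < 1 / 4} := by
    constructor
    · rw [hx1, norm_zero]; norm_num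
    · rw [hx2, norm_zero]; norm_num
  have hmem := hO.inter_closure ⟨hxO, hx⟩
  have hfin : ({y : G | ‖χ₁ y‖ < 1 / 4 ∧ ‖χ₂ y‖ < 1 / 4} ∩
      ((fun p : ι × ι => e (Sum.inl p.1) + e (Sum.inr p.2)) '' R)).Finite := by
    refine (((F.finite_toSet.image e).add (F.finite_toSet.image e))).subset ?_
    rintro _ ⟨⟨hy1, hy2⟩, ⟨i, j⟩, -, rfl⟩
    refine Set.add_mem_add ⟨_, ?_, rfl⟩ ⟨_, ?_, rfl⟩
    · by_contra hi
      have hz : χ₁ (e (Sum.inr j)) = 0 := h10 _ (by rintro ⟨-, k, hk⟩; cases hk)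
      have hb := h11 (Sum.inl i) ⟨hi, i, rfl⟩
      simp only [map_add, hz, add_zero] at hy1
      exact absurd hy1 (not_lt.2 hb)
    · by_contra hi
      have hz : χ₂ (e (Sum.inl i)) = 0 := h20 _ (by rintro ⟨-, k, hk⟩; cases hk)
      have hb := h21 (Sum.inr j) ⟨hi, j, rfl⟩
      simp only [map_add, hz, zero_add] at hy2
      exact absurd hy2 (not_lt.2 hb)
  rw [hfin.isClosed.closure_eq] at hmem
  exact hmem.2

theorem bohr_disjoint {G ι : Type*} [AddCommGroup G] (e : ι ⊕ ι → G)
    (he : ∀ T : Set (ι ⊕ ι), ∃ χ : G →+ AddCircle (1 : ℝ),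
      (∀ i ∉ T, χ (e i) = 0) ∧ ∀ i ∈ T, 1 / 4 ≤ ‖χ (e i)‖) (i j k l : ι)
    (h : e (Sum.inl i) + e (Sum.inr j) = e (Sum.inl k) + e (Sum.inr l)) : i = k ∧ j = l := by
  constructor
  · by_contra hne
    obtain ⟨χ, h0, h1⟩ := he {Sum.inl i}
    have := congrArg χ h
    have hb := h1 _ rfl
    rw [map_add, map_add, h0 (Sum.inr j) (by simp), h0 (Sum.inr l) (by simp),
      h0 (Sum.inl k) (by simpa using Ne.symm hne), add_zero, add_zero] at this
    rw [this, norm_zero] at hb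
    norm_num at hb
  · by_contra hne
    obtain ⟨χ, h0, h1⟩ := he {Sum.inr j}
    have := congrArg χ h
    have hb := h1 _ rfl
    rw [map_add, map_add, h0 (Sum.inl i) (by simp), h0 (Sum.inl k) (by simp),
      h0 (Sum.inr l) (by simpa using Ne.symm hne), zero_add, add_zero] at this
    rw [this, norm_zero] at hb
    norm_num at hb

theorem bohr_accumulate {X ι : Type*} [TopologicalSpace X] [SecondCountableTopology X]
    (h : ι → X) (hι : ¬ Countable ι) :
    ∃ i, ∀ O : Set X, IsOpen O → h i ∈ O → ∃ j, i ≠ j ∧ h j ∈ O := by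
  by_contra! hcon
  apply hι
  letI : TopologicalSpace ι := TopologicalSpace.induced h inferInstance
  haveI : SecondCountableTopology ι := TopologicalSpace.secondCountableTopology_induced _ _ h
  haveI : DiscreteTopology ι := by
    refine discreteTopology_iff_isOpen_singleton.2 fun i => ?_
    obtain ⟨O, hO, hi, hj⟩ := hcon i
    refine ⟨O, hO, ?_⟩
    ext j
    simp only [Set.mem_preimage, Set.mem_singleton_iff]
    constructor
    · intro hjO
      by_contra hne
      exact hj j (Ne.symm hne) hjO
    · rintro rfl; exact hi
  exact TopologicalSpace.separableSpace_iff_countable.1 inferInstance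

theorem bohr_not_normal {G : Type*} [AddCommGroup G] (hG : ¬ Countable G) :
    ¬ @NormalSpace G (bohrTopology G) := by
  intro hN
  obtain ⟨ι, e₀, hι, he₀⟩ := bohr_family hG
  have hinf : Infinite ι := by
    by_contra hfin
    rw [not_infinite_iff_finite] at hfin
    exact hι Finite.to_countable
  obtain ⟨eq⟩ : Nonempty (ι ⊕ ι ≃ ι) := by
    rw [← Cardinal.eq, Cardinal.mk_sum, Cardinal.lift_id, Cardinal.add_eq_self]
    exact Cardinal.aleph0_le_mk ι
  let e : ι ⊕ ι → G := e₀ ∘ eq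
  have he : ∀ T : Set (ι ⊕ ι), ∃ χ : G →+ AddCircle (1 : ℝ),
      (∀ i ∉ T, χ (e i) = 0) ∧ ∀ i ∈ T, 1 / 4 ≤ ‖χ (e i)‖ := by
    intro T
    obtain ⟨χ, h0, h1⟩ := he₀ (eq.symm ⁻¹' T)
    exact ⟨χ, fun i hi => h0 _ (by simpa using hi), fun i hi => h1 _ (by simpa using hi)⟩
  have hsep : @SeparatedNhds G (bohrTopology G)
      ((fun p : ι × ι => e (Sum.inl p.1) + e (Sum.inr p.2)) '' {p | p.1 ≠ p.2})
      ((fun p : ι × ι => e (Sum.inl p.1) + e (Sum.inr p.2)) '' {p | p.1 = p.2}) := by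
    letI := bohrTopology G
    refine normal_separation (bohr_closed e he _) (bohr_closed e he _) ?_
    rw [Set.disjoint_left]
    rintro _ ⟨⟨i, j⟩, hij, rfl⟩ ⟨⟨k, l⟩, hkl, heq⟩
    obtain ⟨h1, h2⟩ := bohr_disjoint e he _ _ _ _ heq
    exact hij (h1.symm.trans (Eq.trans hkl h2))
  obtain ⟨U, V, hU, hV, hAU, hBV, hUV⟩ := hsep
  obtain ⟨C, hC, hmain⟩ := bohrFam_main (fun χ : G →+ AddCircle (1 : ℝ) => χ) U hU
  haveI : Countable C := hC.to_subtype
  have hacc : ∃ i, e (Sum.inl i) + e (Sum.inr i) ∈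
      @closure G (bohrFam (fun i : C => (i : G →+ AddCircle (1 : ℝ)))) U := by
    letI := bohrFam (fun i : C => (i : G →+ AddCircle (1 : ℝ)))
    haveI := bohrFam_group (fun i : C => (i : G →+ AddCircle (1 : ℝ)))
    haveI := bohrFam_secondCountable (fun i : C => (i : G →+ AddCircle (1 : ℝ)))
    obtain ⟨i, hi⟩ := bohr_accumulate (fun i => e (Sum.inr i)) hι
    refine ⟨i, mem_closure_iff.2 fun O hO hiO => ?_⟩
    obtain ⟨j, hj, hjO⟩ := hi ((fun y => e (Sum.inl i) + y) ⁻¹' O)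
      (hO.preimage (continuous_const.add continuous_id)) hiO
    exact ⟨_, hjO, hAU ⟨(i, j), hj, rfl⟩⟩
  obtain ⟨i, hi⟩ := hacc
  obtain ⟨z, hzV, hzU⟩ := hmain _ hi V hV (hBV ⟨(i, i), rfl, rfl⟩)
  exact Set.disjoint_left.1 hUV hzU hzV

/-- For an abelian group `G`, the space `G^#` is normal iff `G` is countable. -/
theorem bohr_normal_iff_countable (G : Type*) [AddCommGroup G] :
    letI := bohrTopology G
    NormalSpace G ↔ Countable G := by
  constructor
  · intro h
    by_contra hG
    exact bohr_not_normal hG h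
  · intro h
    letI := bohrTopology G
    haveI : RegularSpace G := bohrFam_regular (fun χ : G →+ AddCircle (1 : ℝ) => χ)
    exact NormalSpace.of_regularSpace_lindelofSpace
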